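/- arXiv:2305.12007 — 3 statements merged into one kernel-verified Lean document; each statement's English description precedes it below -/
import Mathlib

section
/- Let n be a positive integer and let d₁, d₂ be divisors of n. Then (1/n)·∑_{k|n} c_k(n/d₁)·c_{d₂}(n/k) equals 1 if d₁ = d₂ and equals 0 otherwise. -/
/-- The Ramanujan sum `c_d(r)`: the sum of the `r`-th powers of all primitive
`d`-th roots of unity. -/
noncomputable def ramanujanSum (d r : ℕ) : ℂ :=
  ∑ m ∈ (Finset.range d).filter (fun m => Nat.gcd m d = 1),
    Complex.exp (2 * Real.pi * Complex.I * ((m : ℂ) * (r : ℂ) / (d : ℂ)))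

theorem ramanujanSum_eq (d r : ℕ) (hd : 0 < d) :
    ramanujanSum d r = ∑ z ∈ primitiveRoots d ℂ, z ^ r := by
  have hζ := Complex.isPrimitiveRoot_exp d hd.ne'
  unfold ramanujanSum
  refine Finset.sum_bij (fun m _ => Complex.exp (2 * Real.pi * Complex.I / d) ^ m) ?_ ?_ ?_ ?_
  · intro m hm
    simp only [Finset.mem_filter, Finset.mem_range] at hm
    rw [mem_primitiveRoots hd]
    exact hζ.pow_of_coprime m hm.2
  · intro a ha b hb hab
    simp only [Finset.mem_filter, Finset.mem_range] at ha hb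
    exact hζ.pow_inj ha.1 hb.1 hab
  · intro z hz
    rw [mem_primitiveRoots hd] at hz
    have : NeZero d := ⟨hd.ne'⟩
    obtain ⟨i, hi, hc, h⟩ := (hζ.isPrimitiveRoot_iff).1 hz
    exact ⟨i, by simpa [hi] using hc, h⟩
  · intro m _
    rw [← pow_mul, ← Complex.exp_nat_mul]
    congr 1
    push_cast
    ring

theorem sum_ramanujanSum (n r : ℕ) (hn : 0 < n) :
    ∑ k ∈ n.divisors, ramanujanSum k r = if n ∣ r then (n : ℂ) else 0 := by
  classical
  have hζ := Complex.isPrimitiveRoot_exp n hn.ne'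
  have : NeZero n := ⟨hn.ne'⟩
  have h1 : ∑ k ∈ n.divisors, ramanujanSum k r = ∑ z ∈ Polynomial.nthRootsFinset n (1 : ℂ), z ^ r := by
    rw [IsPrimitiveRoot.nthRoots_one_eq_biUnion_primitiveRoots, Finset.sum_biUnion]
    · exact Finset.sum_congr rfl fun k hk => ramanujanSum_eq k r (Nat.pos_of_mem_divisors hk)
    · intro a _ b _ hab
      exact IsPrimitiveRoot.disjoint hab
  have h2 : ∑ i ∈ Finset.range n, (Complex.exp (2 * Real.pi * Complex.I / n) ^ r) ^ i
      = ∑ z ∈ Polynomial.nthRootsFinset n (1 : ℂ), z ^ r := by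
    refine Finset.sum_bij (fun m _ => Complex.exp (2 * Real.pi * Complex.I / n) ^ m) ?_ ?_ ?_ ?_
    · intro m _
      rw [Polynomial.mem_nthRootsFinset hn, ← pow_mul, mul_comm m n, pow_mul, hζ.pow_eq_one, one_pow]
    · intro a ha b hb hab
      exact hζ.pow_inj (Finset.mem_range.1 ha) (Finset.mem_range.1 hb) hab
    · intro z hz
      rw [Polynomial.mem_nthRootsFinset hn] at hz
      obtain ⟨i, hi, h⟩ := hζ.eq_pow_of_pow_eq_one hz
      exact ⟨i, Finset.mem_range.2 hi, h⟩
    · intro m _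
      rw [← pow_mul, ← pow_mul, mul_comm r m]
  rw [h1, ← h2]
  split_ifs with h
  · rw [(hζ.pow_eq_one_iff_dvd r).2 h]
    simp
  · have hne : Complex.exp (2 * Real.pi * Complex.I / n) ^ r ≠ 1 :=
      fun h' => h ((hζ.pow_eq_one_iff_dvd r).1 h')
    rw [geom_sum_eq hne, ← pow_mul, mul_comm r n, pow_mul, hζ.pow_eq_one, one_pow]
    simp

theorem sum_aux (n : ℕ) (hn : 0 < n) (d₁ d₂ : ℕ) (h₁ : d₁ ∣ n) (h₂ : d₂ ∣ n) :
    ∑ e ∈ d₂.divisors, ∑ k ∈ n.divisors, ramanujanSum k (n / d₁) * ramanujanSum e (n / k) =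
      if d₁ ∣ d₂ then (n : ℂ) else 0 := by
  have hd₂ : 0 < d₂ := Nat.pos_of_dvd_of_pos h₂ hn
  have hd₁ : 0 < d₁ := Nat.pos_of_dvd_of_pos h₁ hn
  obtain ⟨q, rfl⟩ := h₂
  have hq : 0 < q := Nat.pos_of_mul_pos_left hn
  rw [Finset.sum_comm]
  simp_rw [← Finset.mul_sum, sum_ramanujanSum d₂ _ hd₂, mul_ite, mul_zero]
  rw [← Finset.sum_filter]
  have hf : (d₂ * q).divisors.filter (fun k => d₂ ∣ d₂ * q / k) = q.divisors := by
    ext k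
    simp only [Finset.mem_filter, Nat.mem_divisors]
    constructor
    · rintro ⟨⟨hk, _⟩, h⟩
      refine ⟨?_, hq.ne'⟩
      rw [Nat.dvd_div_iff_mul_dvd hk, mul_comm k] at h
      exact Nat.dvd_of_mul_dvd_mul_left hd₂ h
    · rintro ⟨hk, _⟩
      have hk' : k ∣ d₂ * q := hk.mul_left _
      refine ⟨⟨hk', hn.ne'⟩, ?_⟩
      rw [Nat.dvd_div_iff_mul_dvd hk', mul_comm k]
      exact Nat.mul_dvd_mul_left _ hk
  rw [hf, ← Finset.sum_mul, sum_ramanujanSum q _ hq]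
  have : q ∣ d₂ * q / d₁ ↔ d₁ ∣ d₂ := by
    rw [Nat.dvd_div_iff_mul_dvd h₁]
    exact Nat.mul_dvd_mul_iff_right hq
  simp only [this]
  split_ifs
  · push_cast; ring
  · simp

theorem main_aux (n : ℕ) (hn : 0 < n) (d₁ : ℕ) (h₁ : d₁ ∣ n) (d₂ : ℕ) (h₂ : d₂ ∣ n) :
    ∑ k ∈ n.divisors, ramanujanSum k (n / d₁) * ramanujanSum d₂ (n / k) =
      if d₁ = d₂ then (n : ℂ) else 0 := by
  induction d₂ using Nat.strong_induction_on with
  | _ d₂ ih =>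
    have hd₂ : 0 < d₂ := Nat.pos_of_dvd_of_pos h₂ hn
    have h := sum_aux n hn d₁ d₂ h₁ h₂
    have h' : ∑ e ∈ d₂.divisors, (if d₁ = e then (n : ℂ) else 0) = if d₁ ∣ d₂ then (n : ℂ) else 0 := by
      rw [Finset.sum_ite_eq]
      simp [hd₂.ne']
    rw [← h', ← Nat.cons_self_properDivisors hd₂.ne', Finset.sum_cons, Finset.sum_cons] at h
    rw [Finset.sum_congr rfl (fun e he => ih e (Nat.mem_properDivisors.1 he).2
      ((Nat.mem_properDivisors.1 he).1.trans h₂))] at h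
    exact add_right_cancel h

theorem stmt_6 (n : ℕ) (hn : 0 < n) (d₁ d₂ : ℕ) (h₁ : d₁ ∣ n) (h₂ : d₂ ∣ n) :
    (1 / (n : ℂ)) * ∑ k ∈ n.divisors, ramanujanSum k (n / d₁) * ramanujanSum d₂ (n / k) =
      if d₁ = d₂ then 1 else 0 := by
  rw [main_aux n hn d₁ h₁ d₂ h₂]
  have : (n : ℂ) ≠ 0 := by exact_mod_cast hn.ne'
  split_ifs <;> simp [this]
end

section
/- Let n = x·s where s > 1 is a squarefree positive integer and x is a positive integer coprime to s. Let k = z·t be a divisor of n with z | x and t | s. Then Y[n, z·t] = s·Y[x,z] if t = s, and Y[n, z·t] = 0 if t ≠ s. -/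
/-- `Y[n,k] = ∑_{d ∣ n} c_k(n/d) · c_d(n/d)`. -/
noncomputable def Y (n k : ℕ) : ℂ :=
  ∑ d ∈ n.divisors, ramanujanSum k (n / d) * ramanujanSum d (n / d)

theorem rs_inj {u a : ℕ} (h : Nat.Coprime u a) {y w : ℂ} (hy : y ^ a = 1) (hw : w ^ a = 1)
    (hw0 : w ≠ 0) (e : y ^ u = w ^ u) : y = w := by
  have h1 : (y / w) ^ a = 1 := by rw [div_pow, hy, hw, div_one]
  have h2 : (y / w) ^ u = 1 := by rw [div_pow, e, div_self (pow_ne_zero _ hw0)]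
  have h3 : orderOf (y / w) ∣ 1 := by
    rw [← h]
    exact Nat.dvd_gcd (orderOf_dvd_of_pow_eq_one h2) (orderOf_dvd_of_pow_eq_one h1)
  have h4 : y / w = 1 := orderOf_eq_one_iff.mp (Nat.dvd_one.mp h3)
  exact (div_eq_one_iff_eq hw0).mp h4

theorem rs_eq {d : ℕ} (hd : 0 < d) (r : ℕ) :
    ramanujanSum d r = ∑ y ∈ primitiveRoots d ℂ, y ^ r := by
  have hp := Complex.isPrimitiveRoot_exp d hd.ne'
  set w := Complex.exp (2 * Real.pi * Complex.I / d) with hw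
  have hinj : Set.InjOn (fun m : ℕ => w ^ m)
      ((Finset.range d).filter (fun m => Nat.gcd m d = 1) : Finset ℕ) := by
    intro i hi j hj e
    simp at hi hj
    exact hp.pow_inj hi.1 hj.1 e
  have him : ((Finset.range d).filter (fun m => Nat.gcd m d = 1)).image (fun m : ℕ => w ^ m)
      = primitiveRoots d ℂ := by
    apply Finset.eq_of_subset_of_card_le
    · intro y hy
      simp only [Finset.mem_image, Finset.mem_filter] at hy
      obtain ⟨m, hm, rfl⟩ := hy
      rw [mem_primitiveRoots hd]
      exact hp.pow_of_coprime m hm.2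
    · rw [Finset.card_image_of_injOn hinj, Complex.card_primitiveRoots]
      rw [Nat.totient]
      simp only [Nat.coprime_comm (n := d)]
      exact le_refl _
  rw [← him, Finset.sum_image hinj, ramanujanSum]
  refine Finset.sum_congr rfl fun m _ => ?_
  rw [hw, ← Complex.exp_nat_mul, ← Complex.exp_nat_mul]
  congr 1
  ring

theorem rs_mul {a b : ℕ} (ha : 0 < a) (hb : 0 < b) (h : Nat.Coprime a b) (r : ℕ) :
    ramanujanSum (a * b) r = ramanujanSum a r * ramanujanSum b r := by
  rw [rs_eq ha, rs_eq hb, rs_eq (Nat.mul_pos ha hb), Finset.sum_mul_sum, ← Finset.sum_product']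
  have hinj : Set.InjOn (fun q : ℂ × ℂ => q.1 * q.2)
      (primitiveRoots a ℂ ×ˢ primitiveRoots b ℂ : Finset (ℂ × ℂ)) := by
    rintro ⟨y, w⟩ h1 ⟨y', w'⟩ h2 e
    simp only [Finset.coe_product, Set.mem_prod, Finset.mem_coe, mem_primitiveRoots ha,
      mem_primitiveRoots hb] at h1 h2 e
    have e1 : y = y' := by
      refine rs_inj h.symm h1.1.pow_eq_one h2.1.pow_eq_one (h2.1.ne_zero ha.ne') ?_
      have := congrArg (· ^ b) e
      simpa [mul_pow, h1.2.pow_eq_one, h2.2.pow_eq_one] using this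
    have e2 : w = w' := by
      refine rs_inj h h1.2.pow_eq_one h2.2.pow_eq_one (h2.2.ne_zero hb.ne') ?_
      have := congrArg (· ^ a) e
      simpa [mul_pow, h1.1.pow_eq_one, h2.1.pow_eq_one] using this
    rw [e1, e2]
  have him : (primitiveRoots a ℂ ×ˢ primitiveRoots b ℂ).image (fun q : ℂ × ℂ => q.1 * q.2)
      = primitiveRoots (a * b) ℂ := by
    apply Finset.eq_of_subset_of_card_le
    · intro y hy
      simp only [Finset.mem_image, Finset.mem_product, mem_primitiveRoots ha,
        mem_primitiveRoots hb] at hy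
      obtain ⟨q, ⟨h1, h2⟩, rfl⟩ := hy
      rw [mem_primitiveRoots (Nat.mul_pos ha hb)]
      have := (Commute.all q.1 q.2).orderOf_mul_eq_mul_orderOf_of_coprime
        (by rw [← h1.eq_orderOf, ← h2.eq_orderOf]; exact h)
      rw [← h1.eq_orderOf, ← h2.eq_orderOf] at this
      rw [← this]
      exact IsPrimitiveRoot.orderOf _
    · rw [Finset.card_image_of_injOn hinj, Finset.card_product]
      simp only [Complex.card_primitiveRoots, Nat.totient_mul h, le_refl]
  rw [← him, Finset.sum_image hinj]
  exact Finset.sum_congr rfl fun q _ => mul_pow _ _ _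

theorem rs_arg {a u : ℕ} (ha : 0 < a) (h : Nat.Coprime u a) (r : ℕ) :
    ramanujanSum a (u * r) = ramanujanSum a r := by
  rw [rs_eq ha, rs_eq ha]
  have hinj : Set.InjOn (fun y : ℂ => y ^ u) (primitiveRoots a ℂ : Finset ℂ) := by
    intro y h1 w h2 e
    simp only [Finset.mem_coe, mem_primitiveRoots ha] at h1 h2
    exact rs_inj h h1.pow_eq_one h2.pow_eq_one (h2.ne_zero ha.ne') e
  have him : (primitiveRoots a ℂ).image (fun y : ℂ => y ^ u) = primitiveRoots a ℂ := by
    apply Finset.eq_of_subset_of_card_le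
    · intro y hy
      simp only [Finset.mem_image, mem_primitiveRoots ha] at hy
      obtain ⟨q, h1, rfl⟩ := hy
      rw [mem_primitiveRoots ha]
      exact h1.pow_of_coprime _ h
    · rw [Finset.card_image_of_injOn hinj]
  conv_rhs => rw [← him, Finset.sum_image hinj]
  exact Finset.sum_congr rfl fun q _ => pow_mul _ _ _

theorem Y_mul {a b z t : ℕ} (ha : 0 < a) (hb : 0 < b) (h : Nat.Coprime a b)
    (hz : z ∣ a) (ht : t ∣ b) : Y (a * b) (z * t) = Y a z * Y b t := by
  have hz0 := Nat.pos_of_dvd_of_pos hz ha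
  have ht0 := Nat.pos_of_dvd_of_pos ht hb
  have key : ∀ d ∈ a.divisors, ∀ e ∈ b.divisors,
      ramanujanSum (z * t) (a * b / (d * e)) * ramanujanSum (d * e) (a * b / (d * e)) =
      (ramanujanSum z (a / d) * ramanujanSum d (a / d)) *
      (ramanujanSum t (b / e) * ramanujanSum e (b / e)) := by
    intro d hd e he
    have hd := Nat.dvd_of_mem_divisors hd
    have he := Nat.dvd_of_mem_divisors he
    rw [Nat.mul_div_mul_comm hd he]
    have gen : ∀ d' e', d' ∣ a → e' ∣ b → ramanujanSum (d' * e') (a / d * (b / e)) =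
        ramanujanSum d' (a / d) * ramanujanSum e' (b / e) := by
      intro d' e' hd' he'
      have hd0 := Nat.pos_of_dvd_of_pos hd' ha
      have he0 := Nat.pos_of_dvd_of_pos he' hb
      rw [rs_mul hd0 he0 (h.of_dvd hd' he'),
        rs_arg he0 (h.of_dvd (Nat.div_dvd_of_dvd hd) he'), mul_comm (a / d),
        rs_arg hd0 (h.symm.of_dvd (Nat.div_dvd_of_dvd he) hd')]
    rw [gen z t hz ht, gen d e hd he]
    ring
  have hg : ∀ d e, d ∣ a → e ∣ b → Nat.gcd (d * e) a = d := by
    intro d e hd he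
    rw [Nat.Coprime.gcd_mul_right_cancel d (h.symm.of_dvd_left he)]
    exact Nat.gcd_eq_left hd
  have hinj : Set.InjOn (fun q : ℕ × ℕ => q.1 * q.2)
      (a.divisors ×ˢ b.divisors : Finset (ℕ × ℕ)) := by
    rintro ⟨d, e⟩ h1 ⟨d', e'⟩ h2 he
    simp only [Finset.coe_product, Set.mem_prod, Finset.mem_coe, Nat.mem_divisors] at h1 h2 he
    have e1 : d = d' := by
      rw [← hg d e h1.1.1 h1.2.1, he, hg d' e' h2.1.1 h2.2.1]
    subst e1
    have := Nat.eq_of_mul_eq_mul_left (Nat.pos_of_dvd_of_pos h1.1.1 ha) he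
    rw [this]
  have him : (a * b).divisors = (a.divisors ×ˢ b.divisors).image (fun q : ℕ × ℕ => q.1 * q.2) := by
    rw [Nat.divisors_mul]
    rfl
  rw [Y, him, Finset.sum_image hinj, Finset.sum_product, Y, Y, Finset.sum_mul_sum]
  exact Finset.sum_congr rfl fun d hd => Finset.sum_congr rfl fun e he => key d hd e he

theorem Y_one : Y 1 1 = 1 := by
  simp [Y, ramanujanSum]

theorem rs_one (r : ℕ) : ramanujanSum 1 r = 1 := by
  simp [ramanujanSum]

theorem rs_prime_one {p : ℕ} (hp : p.Prime) : ramanujanSum p 1 = -1 := by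
  have hs := (Complex.isPrimitiveRoot_exp p hp.pos.ne').geom_sum_eq_zero hp.one_lt
  have hf : (Finset.range p).filter (fun m => Nat.gcd m p = 1) = (Finset.range p).erase 0 := by
    ext m
    simp only [Finset.mem_filter, Finset.mem_range, Finset.mem_erase]
    constructor
    · rintro ⟨h1, h2⟩
      refine ⟨?_, h1⟩
      rintro rfl
      simp at h2
      exact hp.one_lt.ne' h2
    · rintro ⟨h1, h2⟩
      exact ⟨h2, (Nat.coprime_of_lt_prime h1 h2 hp).symm⟩
  rw [← Finset.add_sum_erase _ _ (Finset.mem_range.mpr hp.pos)] at hs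
  rw [ramanujanSum, hf]
  rw [pow_zero] at hs
  rw [eq_neg_iff_add_eq_zero, add_comm, ← hs]
  congr 1
  refine Finset.sum_congr rfl fun m _ => ?_
  rw [← Complex.exp_nat_mul]
  congr 1
  push_cast
  ring

theorem rs_prime_self {p : ℕ} (hp : p.Prime) : ramanujanSum p p = p - 1 := by
  rw [rs_eq hp.pos, Finset.sum_congr rfl (g := fun _ => (1 : ℂ))]
  · simp [Complex.card_primitiveRoots, Nat.totient_prime hp, hp.one_le]
  · intro y hy
    exact ((mem_primitiveRoots hp.pos).mp hy).pow_eq_one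

theorem Y_prime {p : ℕ} (hp : p.Prime) : Y p 1 = 0 ∧ Y p p = p := by
  constructor <;> rw [Y, hp.sum_divisors] <;>
    simp [rs_one, rs_prime_one hp, rs_prime_self hp, Nat.div_self hp.pos]

theorem Y_sqf (s : ℕ) : Squarefree s → ∀ t, t ∣ s → Y s t = if t = s then (s : ℂ) else 0 := by
  induction s using induction_on_primes with
  | zero => intro h; simp at h
  | one =>
    intro _ t ht
    rw [Nat.dvd_one.mp ht, Y_one]
    simp
  | prime_mul p a hp ih =>
    intro h t ht
    have hc := Nat.coprime_of_squarefree_mul h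
    have ha : Squarefree a := h.of_mul_right
    have ha0 : 0 < a := Nat.pos_of_ne_zero ha.ne_zero
    obtain ⟨t1, t2, h1, h2, rfl⟩ := (Nat.dvd_mul).mp ht
    rw [Y_mul hp.pos ha0 hc h1 h2, ih ha t2 h2]
    rcases (Nat.dvd_prime hp).mp h1 with rfl | rfl
    · rw [(Y_prime hp).1, zero_mul, if_neg]
      intro e
      have : p ∣ t2 := by rw [one_mul] at e; exact e ▸ dvd_mul_right _ _
      have := Nat.Coprime.of_dvd (dvd_refl p) h2 hc
      exact hp.one_lt.ne' (Nat.Coprime.eq_one_of_dvd this ‹_›)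
    · rw [(Y_prime hp).2]
      by_cases e : t2 = a
      · simp [e]
      · simp [e, hp.ne_zero]

theorem stmt_14 (x s : ℕ) (hx : 0 < x) (hs : 1 < s) (hsf : Squarefree s)
    (hcop : Nat.Coprime x s) (z t : ℕ) (hz : z ∣ x) (ht : t ∣ s) :
    Y (x * s) (z * t) = if t = s then (s : ℂ) * Y x z else 0 := by
  rw [Y_mul hx (by omega) hcop hz ht, Y_sqf s hsf t ht]
  split_ifs <;> ring
end

section
/- Let q be a prime, r ≥ 1 an integer, and n = q^{2r}. Then for 0 ≤ i ≤ 2r, Y[n, q^i] = q^r·φ(q^i) if 0 ≤ i ≤ r, and Y[n, q^i] = 0 if r+1 ≤ i ≤ 2r. -/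
/-- Full exponential sum. -/
theorem full_sum (d m : ℕ) (hd : d ≠ 0) :
    ∑ x ∈ Finset.range d,
      Complex.exp (2 * Real.pi * Complex.I * ((x : ℂ) * (m : ℂ) / (d : ℂ)))
      = if d ∣ m then (d : ℂ) else 0 := by
  have hz := Complex.isPrimitiveRoot_exp d hd
  set z := Complex.exp (2 * Real.pi * Complex.I / d) with hzdef
  have h1 : ∀ x ∈ Finset.range d,
      Complex.exp (2 * Real.pi * Complex.I * ((x : ℂ) * (m : ℂ) / (d : ℂ))) = (z ^ m) ^ x := by
    intro x _
    rw [← pow_mul, hzdef, ← Complex.exp_nat_mul]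
    congr 1
    push_cast
    ring
  rw [Finset.sum_congr rfl h1]
  split_ifs with h
  · rw [(hz.pow_eq_one_iff_dvd m).2 h]
    simp
  · have hne : z ^ m ≠ 1 := fun h' => h ((hz.pow_eq_one_iff_dvd m).1 h')
    rw [geom_sum_eq hne, ← pow_mul, mul_comm m d, pow_mul, hz.pow_eq_one]
    simp

theorem ram_zero (q m : ℕ) : ramanujanSum (q ^ 0) m = 1 := by
  simp [ramanujanSum]

theorem ram_succ (q : ℕ) (hq : q.Prime) (a b : ℕ) :
    ramanujanSum (q ^ (a + 1)) (q ^ b) =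
      (if a + 1 ≤ b then (q : ℂ) ^ (a + 1) else 0) - (if a ≤ b then (q : ℂ) ^ a else 0) := by
  have e1 := full_sum (q ^ (a + 1)) (q ^ b) (pow_ne_zero _ hq.ne_zero)
  have e2 := full_sum (q ^ a) (q ^ b) (pow_ne_zero _ hq.ne_zero)
  simp only [Nat.pow_dvd_pow_iff_le_right hq.one_lt, Nat.cast_pow] at e1 e2
  rw [← e1, ← e2, eq_sub_iff_add_eq]
  unfold ramanujanSum
  rw [← Finset.sum_filter_add_sum_filter_not (Finset.range (q ^ (a + 1)))
    (fun m => Nat.gcd m (q ^ (a + 1)) = 1)]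
  simp only [Nat.cast_pow]
  congr 1
  have hq0 : (q : ℂ) ≠ 0 := by exact_mod_cast hq.ne_zero
  refine Finset.sum_bij (fun x _ => q * x) ?_ ?_ ?_ ?_
  · intro x hx
    simp only [Finset.mem_range, Finset.mem_filter] at hx ⊢
    refine ⟨by rw [pow_succ, mul_comm]; exact Nat.mul_lt_mul_of_pos_right hx hq.pos, ?_⟩
    intro h
    have : q ∣ Nat.gcd (q * x) (q ^ (a + 1)) :=
      Nat.dvd_gcd (dvd_mul_right _ _) (dvd_pow_self _ (by omega))
    rw [h] at this
    exact hq.one_lt.ne' (Nat.dvd_one.1 this)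
  · intro x _ y _ h
    exact Nat.eq_of_mul_eq_mul_left hq.pos h
  · intro y hy
    simp only [Finset.mem_range, Finset.mem_filter] at hy
    have hdvd : q ∣ y := by
      by_contra hnd
      exact hy.2 (Nat.Coprime.pow_right _ ((Nat.Prime.coprime_iff_not_dvd hq).2 hnd).symm)
    obtain ⟨x, rfl⟩ := hdvd
    refine ⟨x, ?_, rfl⟩
    have := hy.1
    rw [pow_succ, mul_comm] at this
    exact Finset.mem_range.2 (Nat.lt_of_mul_lt_mul_right this)
  · intro x _
    congr 2
    push_cast
    field_simp
    ring

/-- `φ(q^j)` in complex form. -/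
theorem ram_tot (q : ℕ) (hq : q.Prime) (a b : ℕ) (h : a ≤ b) :
    ramanujanSum (q ^ a) (q ^ b) = (Nat.totient (q ^ a) : ℂ) := by
  cases a with
  | zero => rw [ram_zero]; simp
  | succ a =>
    rw [ram_succ q hq, if_pos h, if_pos (by omega), Nat.totient_prime_pow_succ hq]
    push_cast [hq.one_le]
    ring

theorem tot_sum (q : ℕ) (hq : q.Prime) (s : ℕ) :
    ∑ j ∈ Finset.range (s + 1), (Nat.totient (q ^ j) : ℂ) = (q : ℂ) ^ s := by
  induction s with
  | zero => simp
  | succ s ih =>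
    rw [Finset.sum_range_succ, ih, Nat.totient_prime_pow_succ hq]
    push_cast [hq.one_le]
    ring

theorem tot_sum_le (q : ℕ) (hq : q.Prime) (s r : ℕ) (h : s ≤ r) (c : ℂ) :
    ∑ j ∈ Finset.range (r + 1), (if j ≤ s then c else 0) * (Nat.totient (q ^ j) : ℂ)
      = c * (q : ℂ) ^ s := by
  rw [← tot_sum q hq s, Finset.mul_sum]
  symm
  refine Finset.sum_subset_zero_on_sdiff (Finset.range_mono (by omega)) ?_ ?_
  · intro j hj
    simp only [Finset.mem_sdiff, Finset.mem_range] at hj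
    rw [if_neg (by omega), zero_mul]
  · intro j hj
    rw [if_pos (by simp at hj; omega)]

theorem stmt_16 (q : ℕ) (hq : q.Prime) (r : ℕ) (hr : 1 ≤ r) (i : ℕ) (hi : i ≤ 2 * r) :
    Y (q ^ (2 * r)) (q ^ i) =
      if i ≤ r then (q : ℂ) ^ r * (Nat.totient (q ^ i) : ℂ) else 0 := by
  have hY : Y (q ^ (2 * r)) (q ^ i) = ∑ j ∈ Finset.range (r + 1),
      ramanujanSum (q ^ i) (q ^ (2 * r - j)) * (Nat.totient (q ^ j) : ℂ) := by
    unfold Y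
    rw [Nat.sum_divisors_prime_pow hq]
    symm
    refine Finset.sum_subset_zero_on_sdiff (Finset.range_mono (by omega)) ?_ ?_
    · intro j hj
      simp only [Finset.mem_sdiff, Finset.mem_range] at hj
      rw [Nat.pow_div (by omega) hq.pos]
      obtain ⟨k, rfl⟩ : ∃ k, j = k + 1 := ⟨j - 1, by omega⟩
      rw [ram_succ q hq k, if_neg (by omega), if_neg (by omega)]
      simp
    · intro j hj
      simp only [Finset.mem_range] at hj
      rw [Nat.pow_div (by omega) hq.pos, ram_tot q hq j _ (by omega)]
  rw [hY]
  split_ifs with h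
  · rw [← tot_sum q hq r, Finset.sum_mul]
    refine Finset.sum_congr rfl fun j hj => ?_
    simp only [Finset.mem_range] at hj
    rw [ram_tot q hq i _ (by omega), mul_comm]
  · obtain ⟨k, rfl⟩ : ∃ k, i = k + 1 := ⟨i - 1, by omega⟩
    have A := tot_sum_le q hq (2 * r - (k + 1)) r (by omega) ((q : ℂ) ^ (k + 1))
    have B := tot_sum_le q hq (2 * r - k) r (by omega) ((q : ℂ) ^ k)
    rw [← pow_add] at A B
    have hE : k + 1 + (2 * r - (k + 1)) = k + (2 * r - k) := by omega
    rw [hE, ← B] at A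
    rw [← sub_eq_zero, ← Finset.sum_sub_distrib] at A
    rw [← A]
    refine Finset.sum_congr rfl fun j hj => ?_
    simp only [Finset.mem_range] at hj
    have h1 : (k + 1 ≤ 2 * r - j) ↔ (j ≤ 2 * r - (k + 1)) := by omega
    have h2 : (k ≤ 2 * r - j) ↔ (j ≤ 2 * r - k) := by omega
    rw [ram_succ q hq k, sub_mul]
    simp only [h1, h2]
end
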